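/- arXiv:2004.14270 — 5 statements merged into one kernel-verified Lean document; each statement's English description precedes it below -/
import Mathlib

section
/- Let Q be a real symmetric positive semidefinite N×N matrix of rank k, and let k₁, …, kₙ be nonnegative integers with k₁ + ⋯ + kₙ = k. Then the map sending an n-tuple (Q₁, …, Qₙ) of positive semidefinite symmetric matrices with Q₁ + ⋯ + Qₙ = Q and rank Qᵢ = kᵢ for each i to the flag (range Q₁ ⊆ range(Q₁ + Q₂) ⊆ ⋯ ⊆ range(Q₁ + ⋯ + Q_{n−1})) is a bijection onto the set of flags of linear subspaces V₁ ⊆ V₂ ⊆ ⋯ ⊆ V_{n−1} ⊆ range Q with dim Vᵢ = k₁ + ⋯ + kᵢ. -/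
open scoped Matrix

noncomputable section

namespace Matrix

section Rank

variable {ι κ : Type*} [Fintype ι]

theorem range_mulVecLin_add_le (A B : Matrix κ ι ℝ) :
    LinearMap.range (A + B).mulVecLin ≤
      LinearMap.range A.mulVecLin ⊔ LinearMap.range B.mulVecLin := by
  rw [mulVecLin_add]
  exact LinearMap.range_add_le _ _

theorem range_mulVecLin_mul_le {l : Type*} [Fintype l] (A : Matrix κ ι ℝ) (B : Matrix ι l ℝ) :
    LinearMap.range (A * B).mulVecLin ≤ LinearMap.range A.mulVecLin := by
  rw [mulVecLin_mul]
  exact LinearMap.range_comp_le_range _ _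

theorem rank_add_le_rank_add_rank [Finite κ] (A B : Matrix κ ι ℝ) :
    (A + B).rank ≤ A.rank + B.rank :=
  (Submodule.finrank_mono (range_mulVecLin_add_le A B)).trans
    (Submodule.finrank_add_le_finrank_add_finrank _ _)

theorem rank_sum_le [Finite κ] {α : Type*} (s : Finset α) (A : α → Matrix κ ι ℝ) :
    (∑ a ∈ s, A a).rank ≤ ∑ a ∈ s, (A a).rank := by
  classical
  induction s using Finset.induction_on with
  | empty => simp
  | insert a s ha ih =>
    rw [Finset.sum_insert ha, Finset.sum_insert ha]
    exact (rank_add_le_rank_add_rank _ _).trans (Nat.add_le_add_left ih _)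

/-- When ranks add, the range of the sum contains the range of each summand. -/
theorem range_mulVecLin_le_of_rank_add [Finite κ] {A B : Matrix κ ι ℝ}
    (h : A.rank + B.rank ≤ (A + B).rank) :
    LinearMap.range A.mulVecLin ≤ LinearMap.range (A + B).mulVecLin := by
  rw [Submodule.eq_of_le_of_finrank_le (range_mulVecLin_add_le A B)
    ((Submodule.finrank_add_le_finrank_add_finrank _ _).trans h)]
  exact le_sup_left

/-- When ranks add, the ranges of the summands are independent. -/
theorem disjoint_range_mulVecLin_of_rank_add [Finite κ] {A B : Matrix κ ι ℝ}
    (h : A.rank + B.rank ≤ (A + B).rank) :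
    Disjoint (LinearMap.range A.mulVecLin) (LinearMap.range B.mulVecLin) := by
  have hle := Submodule.finrank_mono (range_mulVecLin_add_le A B)
  have hadd := Submodule.finrank_sup_add_finrank_inf_eq
    (LinearMap.range A.mulVecLin) (LinearMap.range B.mulVecLin)
  rw [disjoint_iff, ← Submodule.finrank_eq_zero (R := ℝ)]
  simp only [rank] at h
  lia

/-- When ranks add, the kernels of the summands span the whole space. -/
theorem ker_mulVecLin_sup_eq_top_of_rank_add [Finite κ] {A B : Matrix κ ι ℝ}
    (h : A.rank + B.rank ≤ (A + B).rank) :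
    LinearMap.ker A.mulVecLin ⊔ LinearMap.ker B.mulVecLin = ⊤ := by
  have hker : LinearMap.ker A.mulVecLin ⊓ LinearMap.ker B.mulVecLin ≤
      LinearMap.ker (A + B).mulVecLin := by
    rintro x ⟨hA, hB⟩
    simp_all
  have hle := Submodule.finrank_mono hker
  have hadd := Submodule.finrank_sup_add_finrank_inf_eq
    (LinearMap.ker A.mulVecLin) (LinearMap.ker B.mulVecLin)
  have hA := LinearMap.finrank_range_add_finrank_ker A.mulVecLin
  have hB := LinearMap.finrank_range_add_finrank_ker B.mulVecLin
  have hAB := LinearMap.finrank_range_add_finrank_ker (A + B).mulVecLin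
  simp only [rank] at h
  apply Submodule.eq_top_of_finrank_eq
  have := Submodule.finrank_le (LinearMap.ker A.mulVecLin ⊔ LinearMap.ker B.mulVecLin)
  lia

end Rank

section Symmetric

variable {ι : Type*} [Fintype ι]

theorem IsSymm.ker_mulVecLin_le_of_range_le {A B : Matrix ι ι ℝ} (hA : A.IsSymm) (hB : B.IsSymm)
    (h : LinearMap.range B.mulVecLin ≤ LinearMap.range A.mulVecLin) :
    LinearMap.ker A.mulVecLin ≤ LinearMap.ker B.mulVecLin := by
  intro x hx
  rw [LinearMap.mem_ker, mulVecLin_apply] at hx ⊢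
  obtain ⟨y, hy⟩ := h ⟨B *ᵥ x, rfl⟩
  simp only [mulVecLin_apply] at hy
  rw [← dotProduct_self_eq_zero]
  calc B *ᵥ x ⬝ᵥ B *ᵥ x = x ⬝ᵥ B *ᵥ (B *ᵥ x) := by
        rw [dotProduct_mulVec x, ← mulVec_transpose, hB.eq]
    _ = 0 := by rw [← hy, dotProduct_mulVec, ← mulVec_transpose, hA.eq, hx, zero_dotProduct]

/-- A symmetric summand of a rank-additive decomposition is determined by its range. -/
theorem IsSymm.eq_of_range_eq_of_rank_add {A B A' B' : Matrix ι ι ℝ}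
    (hA : A.IsSymm) (hA' : A'.IsSymm) (hsum : A + B = A' + B')
    (h : A.rank + B.rank ≤ (A + B).rank) (h' : A'.rank + B'.rank ≤ (A' + B').rank)
    (hrange : LinearMap.range A.mulVecLin = LinearMap.range A'.mulVecLin) : A = A' := by
  classical
  apply ext_of_mulVec_single
  suffices ∀ x, A *ᵥ x = A' *ᵥ x from fun i => this _
  intro x
  obtain ⟨a, ha, b, hb, rfl⟩ := Submodule.mem_sup.1
    ((ker_mulVecLin_sup_eq_top_of_rank_add h).ge (Submodule.mem_top (x := x)))
  have ha' := hA.ker_mulVecLin_le_of_range_le hA' hrange.ge ha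
  simp only [LinearMap.mem_ker, mulVecLin_apply] at ha ha' hb
  have hdiff : A *ᵥ b - A' *ᵥ b = B' *ᵥ b := by
    have := congrArg (· *ᵥ b) hsum
    simp only [add_mulVec, hb, add_zero] at this
    rw [this, add_sub_cancel_left]
  have hmem : A *ᵥ b - A' *ᵥ b ∈ LinearMap.range A'.mulVecLin :=
    sub_mem (hrange.le ⟨b, rfl⟩) ⟨b, rfl⟩
  have hzero := (Submodule.disjoint_def.1 (disjoint_range_mulVecLin_of_rank_add h')) _ hmem
    (hdiff ▸ ⟨b, rfl⟩)
  rw [mulVec_add, mulVec_add, ha, ha', sub_eq_zero.1 hzero]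

/-- Every subspace is the range of a symmetric idempotent matrix. -/
theorem exists_isSymm_isIdempotentElem_range_eq (W : Submodule ℝ (ι → ℝ)) :
    ∃ E : Matrix ι ι ℝ, E.IsSymm ∧ E * E = E ∧ LinearMap.range E.mulVecLin = W := by
  classical
  let e := WithLp.linearEquiv 2 ℝ (ι → ℝ)
  let U : Submodule ℝ (EuclideanSpace ℝ ι) := W.comap e.toLinearMap
  let E : Matrix ι ι ℝ := toEuclideanCLM (n := ι) (𝕜 := ℝ) |>.symm U.starProjection
  have hE : toEuclideanCLM (n := ι) (𝕜 := ℝ) E = U.starProjection :=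
    StarAlgEquiv.apply_symm_apply _ _
  have happ (x : ι → ℝ) : E *ᵥ x = e (U.starProjection (e.symm x)) := by
    rw [← hE]; rfl
  have hproj := isStarProjection_starProjection (U := U)
  refine ⟨E, ?_, ?_, ?_⟩
  · have : star E = E := by
      apply EquivLike.injective (toEuclideanCLM (n := ι) (𝕜 := ℝ))
      rw [map_star, hE]
      exact hproj.isSelfAdjoint
    simpa [star_eq_conjTranspose, IsSymm] using this
  · apply EquivLike.injective (toEuclideanCLM (n := ι) (𝕜 := ℝ))
    rw [map_mul, hE]
    exact hproj.isIdempotentElem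
  · ext x
    constructor
    · rintro ⟨y, rfl⟩
      rw [mulVecLin_apply, happ]
      exact U.starProjection_apply_mem _
    · intro hx
      refine ⟨x, ?_⟩
      rw [mulVecLin_apply, happ, Submodule.starProjection_eq_self_iff.2 (by simpa [U] using hx)]
      simp

theorem mul_eq_of_range_le {κ : Type*} [Fintype κ] {E : Matrix ι ι ℝ} (hE : E * E = E)
    {A : Matrix ι κ ℝ}
    (h : LinearMap.range A.mulVecLin ≤ LinearMap.range E.mulVecLin) : E * A = A := by
  classical
  apply ext_of_mulVec_single
  intro i
  obtain ⟨y, hy⟩ := h ⟨Pi.single i 1, rfl⟩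
  simp only [mulVecLin_apply] at hy
  rw [← mulVec_mulVec, ← hy, mulVec_mulVec, hE]

theorem PosSemidef.exists_eq_mul_transpose {Q : Matrix ι ι ℝ} (hQ : Q.PosSemidef) :
    ∃ C : Matrix ι ι ℝ, Q = C * Cᵀ := by
  classical
  open scoped MatrixOrder in
  obtain ⟨B, hB⟩ := CStarAlgebra.nonneg_iff_eq_star_mul_self.mp hQ.nonneg
  exact ⟨Bᵀ, by simpa [star_eq_conjTranspose] using hB⟩

/-- The range of a difference of nested symmetric idempotents is complementary to that of the
smaller one. -/
theorem IsSymm.rank_sub_add_rank_le {E F : Matrix ι ι ℝ} (hE : E.IsSymm) (hEE : E * E = E)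
    (hF : F.IsSymm) (hFE : F * E = E) : (F - E).rank + E.rank ≤ F.rank := by
  have hEF : E * F = E := by
    simpa [hE.eq, hF.eq] using congrArg Matrix.transpose hFE
  have hdisj : Disjoint (LinearMap.range (F - E).mulVecLin) (LinearMap.range E.mulVecLin) := by
    rw [Submodule.disjoint_def]
    rintro _ ⟨x, rfl⟩ ⟨y, hy⟩
    have hzero : E *ᵥ ((F - E) *ᵥ x) = 0 := by
      rw [mulVec_mulVec, mul_sub, hEF, hEE, sub_self, zero_mulVec]
    simp only [mulVecLin_apply] at hy ⊢
    rw [← hy, mulVec_mulVec, hEE] at hzero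
    rw [← hy, hzero]
  have hle : LinearMap.range (F - E).mulVecLin ⊔ LinearMap.range E.mulVecLin ≤
      LinearMap.range F.mulVecLin := by
    refine sup_le ?_ (hFE ▸ range_mulVecLin_mul_le F E)
    rintro _ ⟨x, rfl⟩
    refine ⟨x - E *ᵥ x, ?_⟩
    simp [mulVec_sub, hFE]
  have hadd := Submodule.finrank_sup_add_finrank_inf_eq
    (LinearMap.range (F - E).mulVecLin) (LinearMap.range E.mulVecLin)
  rw [hdisj.eq_bot, finrank_bot, add_zero] at hadd
  exact hadd.symm.trans_le (Submodule.finrank_mono hle)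

/-- A positive semidefinite `Q` has a family of positive semidefinite compressions indexed by the
subspaces of its range, monotone for the Loewner order and with differences of minimal rank. -/
theorem PosSemidef.exists_compression {Q : Matrix ι ι ℝ} (hQ : Q.PosSemidef) :
    ∃ P : Submodule ℝ (ι → ℝ) → Matrix ι ι ℝ,
      P (LinearMap.range Q.mulVecLin) = Q ∧
      (∀ V ≤ LinearMap.range Q.mulVecLin, LinearMap.range (P V).mulVecLin = V) ∧
      ∀ V W, V ≤ W → W ≤ LinearMap.range Q.mulVecLin →
        (P W - P V).PosSemidef ∧
          (P W - P V).rank + Module.finrank ℝ V ≤ Module.finrank ℝ W := by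
  obtain ⟨C, rfl⟩ := hQ.exists_eq_mul_transpose
  choose E hsymm hidem hrange using exists_isSymm_isIdempotentElem_range_eq (ι := ι)
  let L (V : Submodule ℝ (ι → ℝ)) : Submodule ℝ (ι → ℝ) :=
    LinearMap.range Cᵀ.mulVecLin ⊓ V.comap C.mulVecLin
  have hLmono {V W} (h : V ≤ W) : L V ≤ L W := inf_le_inf_left _ (Submodule.comap_mono h)
  have hmap {V} (hV : V ≤ LinearMap.range (C * Cᵀ).mulVecLin) :
      (L V).map C.mulVecLin = V := by
    refine le_antisymm (Submodule.map_le_iff_le_comap.2 inf_le_right) fun v hv => ?_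
    obtain ⟨y, rfl⟩ := hV hv
    rw [mulVecLin_mul, LinearMap.comp_apply] at hv ⊢
    exact ⟨_, ⟨⟨y, rfl⟩, hv⟩, rfl⟩
  have hfin {V} (hV : V ≤ LinearMap.range (C * Cᵀ).mulVecLin) :
      Module.finrank ℝ (L V) = Module.finrank ℝ V := by
    have hinj : Function.Injective (C.mulVecLin.domRestrict (L V)) := by
      rw [← LinearMap.ker_eq_bot, LinearMap.ker_eq_bot']
      rintro ⟨_, ⟨y, rfl⟩, _⟩ hy
      have hker := ker_mulVecLin_transpose_mul_self Cᵀ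
      rw [transpose_transpose] at hker
      have : y ∈ LinearMap.ker Cᵀ.mulVecLin := by
        rw [← hker]
        simpa using hy
      exact Subtype.ext this
    have := LinearMap.finrank_range_of_inj hinj
    rwa [LinearMap.range_domRestrict, hmap hV, eq_comm] at this
  have hrank {V} (hV : V ≤ LinearMap.range (C * Cᵀ).mulVecLin) :
      (E (L V)).rank = Module.finrank ℝ V := by
    rw [rank, hrange, hfin hV]
  refine ⟨fun V => C * E (L V) * Cᵀ, ?_, fun V hV => ?_, fun V W hVW hW => ⟨?_, ?_⟩⟩
  · have hle : LinearMap.range Cᵀ.mulVecLin ≤ LinearMap.range (E (L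
        (LinearMap.range (C * Cᵀ).mulVecLin))).mulVecLin := by
      rw [hrange]
      rintro _ ⟨y, rfl⟩
      exact ⟨⟨y, rfl⟩, y, by simp⟩
    beta_reduce
    rw [mul_assoc, mul_eq_of_range_le (hidem _) hle]
  · have heq : LinearMap.range (E (L V) * Cᵀ).mulVecLin = L V := by
      refine Submodule.eq_of_le_of_finrank_eq
        ((range_mulVecLin_mul_le _ _).trans (hrange _).le) ?_
      rw [hfin hV, ← rank, ← rank_transpose, transpose_mul, transpose_transpose, (hsymm _).eq,
        rank, mulVecLin_mul, LinearMap.range_comp, hrange, hmap hV]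
    beta_reduce
    rw [mul_assoc, mulVecLin_mul, LinearMap.range_comp, heq, hmap hV]
  all_goals
    have hFE : E (L W) * E (L V) = E (L V) := mul_eq_of_range_le (hidem _) (by
      rw [hrange, hrange]
      exact hLmono hVW)
    have hdiff : C * E (L W) * Cᵀ - C * E (L V) * Cᵀ = C * (E (L W) - E (L V)) * Cᵀ := by
      noncomm_ring
    rw [hdiff]
  · have hEF : E (L V) * E (L W) = E (L V) := by
      simpa [(hsymm _).eq] using congrArg Matrix.transpose hFE
    have hsq : E (L W) - E (L V) = (E (L W) - E (L V)) * (E (L W) - E (L V))ᵀ := by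
      rw [transpose_sub, (hsymm _).eq, (hsymm _).eq, sub_mul, mul_sub, mul_sub, hidem, hidem, hFE,
        hEF]
      abel
    rw [hsq]
    simpa [mul_assoc] using posSemidef_self_mul_conjTranspose (C * (E (L W) - E (L V)))
  · rw [← hrank hW, ← hrank (hVW.trans hW)]
    refine le_trans (Nat.add_le_add_right ?_ _)
      ((hsymm _).rank_sub_add_rank_le (hidem _) (hsymm _) hFE)
    exact (rank_mul_le_left _ _).trans (rank_mul_le_right _ _)

end Symmetric
end Matrix

section PartialSums

variable {M : Type*} [AddCommMonoid M] {n : ℕ}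

theorem Fin.sum_filter_lt_succ (f : Fin n → M) {i : ℕ} (hi : i < n) :
    ∑ j : Fin n with j.val < i + 1, f j = ∑ j : Fin n with j.val < i, f j + f ⟨i, hi⟩ := by
  have : Finset.univ.filter (fun j : Fin n => (j : ℕ) < i + 1) =
      insert ⟨i, hi⟩ (Finset.univ.filter fun j : Fin n => (j : ℕ) < i) := by
    ext j
    simp [Fin.ext_iff]
    lia
  rw [this, Finset.sum_insert (by simp), add_comm]

theorem Fin.sum_filter_lt_of_le (f : Fin n → M) {i : ℕ} (hi : n ≤ i) :
    ∑ j : Fin n with j.val < i, f j = ∑ j, f j := by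
  rw [Finset.filter_true_of_mem fun j _ => j.2.trans_le hi]

theorem Fin.filter_le_eq_filter_lt (i : ℕ) :
    Finset.univ.filter (fun j : Fin n => (j : ℕ) ≤ i) =
      Finset.univ.filter (fun j : Fin n => (j : ℕ) < i + 1) := by
  simp only [Nat.lt_succ_iff]

theorem Fin.eq_of_sum_filter_lt_eq {G : Type*} [AddCommGroup G] {f g : Fin n → G}
    (h : ∀ i, ∑ j : Fin n with j.val < i, f j = ∑ j : Fin n with j.val < i, g j) : f = g := by
  ext i
  have hi := h (i + 1)
  rw [Fin.sum_filter_lt_succ f i.2, Fin.sum_filter_lt_succ g i.2, h i] at hi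
  exact add_left_cancel hi

end PartialSums

section Decompositions

/-- In a decomposition of `Q` into summands whose ranks add up to that of `Q`, ranks also add
along any splitting of the summands into two groups. -/
theorem Matrix.rank_sum_filter_eq {α ι : Type*} [Fintype α] [Fintype ι] {Q : Matrix ι ι ℝ}
    {A : α → Matrix ι ι ℝ} (hsum : ∑ a, A a = Q) (hrank : ∑ a, (A a).rank = Q.rank)
    (p : α → Prop) [DecidablePred p] :
    (∑ a with p a, A a).rank = ∑ a with p a, (A a).rank := by
  have h₁ := rank_sum_le (Finset.univ.filter p) A
  have h₂ := rank_sum_le (Finset.univ.filter fun a => ¬ p a) A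
  have h₃ := rank_add_le_rank_add_rank (∑ a with p a, A a) (∑ a with ¬ p a, A a)
  rw [Finset.sum_filter_add_sum_filter_not, hsum] at h₃
  have h₄ := Finset.sum_filter_add_sum_filter_not Finset.univ p fun a => (A a).rank
  lia

theorem Matrix.rank_sum_filter_add_not_eq {α ι : Type*} [Fintype α] [Fintype ι]
    {Q : Matrix ι ι ℝ} {A : α → Matrix ι ι ℝ} (hsum : ∑ a, A a = Q)
    (hrank : ∑ a, (A a).rank = Q.rank) (p : α → Prop) [DecidablePred p] :
    (∑ a with p a, A a).rank + (∑ a with ¬ p a, A a).rank =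
      (∑ a with p a, A a + ∑ a with ¬ p a, A a).rank := by
  rw [rank_sum_filter_eq hsum hrank, rank_sum_filter_eq hsum hrank,
    Finset.sum_filter_add_sum_filter_not, Finset.sum_filter_add_sum_filter_not, hsum, hrank]

/-- The range of a partial sum grows with the set of summands when ranks add. -/
theorem Matrix.range_sum_filter_mono {α ι : Type*} [Fintype α] [Fintype ι]
    {Q : Matrix ι ι ℝ} {A : α → Matrix ι ι ℝ} (hsum : ∑ a, A a = Q)
    (hrank : ∑ a, (A a).rank = Q.rank) {p q : α → Prop} [DecidablePred p] [DecidablePred q]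
    (hpq : ∀ a, p a → q a) :
    LinearMap.range (∑ a with p a, A a).mulVecLin ≤
      LinearMap.range (∑ a with q a, A a).mulVecLin := by
  have hfilter : Finset.univ.filter (fun a => q a ∧ p a) = Finset.univ.filter p :=
    Finset.filter_congr fun a _ => ⟨And.right, fun h => ⟨hpq a h, h⟩⟩
  have hA := Finset.sum_filter_add_sum_filter_not (Finset.univ.filter q) p A
  have hr := Finset.sum_filter_add_sum_filter_not (Finset.univ.filter q) p fun a => (A a).rank
  rw [Finset.filter_filter, Finset.filter_filter, hfilter] at hA hr
  rw [← hA]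
  apply range_mulVecLin_le_of_rank_add
  rw [hA, rank_sum_filter_eq hsum hrank, rank_sum_filter_eq hsum hrank,
    rank_sum_filter_eq hsum hrank, hr]

end Decompositions

/-- Let `Q` be a real symmetric PSD `N×N` matrix of rank `k` and
`k₁ + ⋯ + kₙ = k`. The map sending a decomposition `(Q₁, …, Qₙ)` of `Q` into PSD matrices
with `rank Qᵢ = kᵢ` to the flag of ranges of partial sums is a bijection onto the set of
flags `V₁ ⊆ ⋯ ⊆ V_{n−1} ⊆ range Q` with `dim Vᵢ = k₁ + ⋯ + kᵢ`. -/
theorem psd_decomposition_flag_bijection {N n : ℕ}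
    (Q : Matrix (Fin N) (Fin N) ℝ) (hQ : Q.PosSemidef)
    (k : Fin n → ℕ) (hk : ∑ i, k i = Q.rank) :
    Set.BijOn
      (fun (Qs : Fin n → Matrix (Fin N) (Fin N) ℝ) (i : Fin (n - 1)) =>
        LinearMap.range
          (Matrix.mulVecLin
            (∑ j ∈ Finset.univ.filter (fun j : Fin n => (j : ℕ) ≤ (i : ℕ)), Qs j)))
      {Qs : Fin n → Matrix (Fin N) (Fin N) ℝ |
        (∀ i, (Qs i).PosSemidef) ∧ (∑ i, Qs i) = Q ∧ ∀ i, (Qs i).rank = k i}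
      {F : Fin (n - 1) → Submodule ℝ (Fin N → ℝ) |
        Monotone F ∧ (∀ i, F i ≤ LinearMap.range Q.mulVecLin) ∧
        ∀ i, Module.finrank ℝ (F i) =
          ∑ j ∈ Finset.univ.filter (fun j : Fin n => (j : ℕ) ≤ (i : ℕ)), k j} := by
  have hksum {Qs : Fin n → Matrix (Fin N) (Fin N) ℝ} (hr : ∀ i, (Qs i).rank = k i) :
      ∑ i, (Qs i).rank = Q.rank := by simp only [hr, hk]
  simp only [Fin.filter_le_eq_filter_lt]
  refine ⟨?_, ?_, ?_⟩
  · rintro Qs ⟨-, hsum, hr⟩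
    refine ⟨fun i j hij => ?_, fun i => ?_, fun i => ?_⟩
    · exact Matrix.range_sum_filter_mono hsum (hksum hr) fun a ha => by lia
    · have := Matrix.range_sum_filter_mono hsum (hksum hr) (p := fun a => (a : ℕ) < i + 1)
        (q := fun _ => True) fun _ _ => trivial
      simpa [hsum] using this
    · refine (Matrix.rank_sum_filter_eq hsum (hksum hr) _).trans ?_
      simp only [hr]
  · rintro Qs ⟨hpsd, hsum, hr⟩ Qs' ⟨hpsd', hsum', hr'⟩ heq
    refine Fin.eq_of_sum_filter_lt_eq fun i => ?_
    rcases Nat.eq_zero_or_pos i with rfl | hpos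
    · simp
    rcases le_or_gt n i with hni | hni
    · rw [Fin.sum_filter_lt_of_le _ hni, Fin.sum_filter_lt_of_le _ hni, hsum, hsum']
    have hrange := congrFun heq ⟨i - 1, by lia⟩
    simp only [Nat.sub_add_cancel hpos] at hrange
    have hadd := Matrix.rank_sum_filter_add_not_eq hsum (hksum hr) fun j => j.val < i
    have hadd' := Matrix.rank_sum_filter_add_not_eq hsum' (hksum hr') fun j => j.val < i
    have hsymm := Matrix.isHermitian_iff_isSymm.1 (Matrix.posSemidef_sum
      (Finset.univ.filter fun j : Fin n => j.val < i) fun j _ => hpsd j).isHermitian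
    have hsymm' := Matrix.isHermitian_iff_isSymm.1 (Matrix.posSemidef_sum
      (Finset.univ.filter fun j : Fin n => j.val < i) fun j _ => hpsd' j).isHermitian
    refine hsymm.eq_of_range_eq_of_rank_add hsymm' ?_ hadd.le hadd'.le hrange
    rw [Finset.sum_filter_add_sum_filter_not, Finset.sum_filter_add_sum_filter_not, hsum, hsum']
  · rintro F ⟨hmono, hle, hfin⟩
    obtain ⟨P, hPQ, hPrange, hPdiff⟩ := hQ.exists_compression
    let G (i : ℕ) : Submodule ℝ (Fin N → ℝ) :=
      if h : 0 < i ∧ i < n then F ⟨i - 1, by lia⟩ else if i = 0 then ⊥ else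
        LinearMap.range Q.mulVecLin
    have hGle (i : ℕ) : G i ≤ LinearMap.range Q.mulVecLin := by
      dsimp only [G]
      split_ifs
      exacts [hle _, bot_le, le_rfl]
    have hGF (i : Fin (n - 1)) : G (i + 1) = F i := by
      have hi : 0 < (i : ℕ) + 1 ∧ (i : ℕ) + 1 < n := by lia
      simp [G, dif_pos hi]
    have hGmono : ∀ i, G i ≤ G (i + 1) := by
      intro i
      dsimp only [G]
      split_ifs
      all_goals first
        | exact bot_le
        | exact hle _
        | exact le_rfl
        | lia
        | exact hmono (by simp [Fin.le_def])
    have hGfin (i : ℕ) (hi : i ≤ n) : Module.finrank ℝ (G i) = ∑ j : Fin n with j.val < i, k j := by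
      by_cases hmid : 0 < i ∧ i < n
      · have hF := hGF ⟨i - 1, by lia⟩
        simp only [Nat.sub_add_cancel hmid.1] at hF
        rw [hF, hfin]
        simp only [Nat.sub_add_cancel hmid.1]
      · rcases Nat.eq_zero_or_pos i with rfl | hpos
        · simp [G]
        · have hG : G i = LinearMap.range Q.mulVecLin :=
            (dif_neg hmid).trans (if_neg hpos.ne')
          rw [hG, Fin.sum_filter_lt_of_le k (by lia), hk, Matrix.rank]
    have hPbot : P ⊥ = 0 := by
      have := hPrange ⊥ bot_le
      rw [LinearMap.range_eq_bot] at this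
      exact Matrix.toLin'.map_eq_zero_iff.1 this
    let Qs (j : Fin n) : Matrix (Fin N) (Fin N) ℝ := P (G (j + 1)) - P (G j)
    have hpartial (i : ℕ) (hi : i ≤ n) : ∑ j : Fin n with j.val < i, Qs j = P (G i) := by
      induction i with
      | zero => simp [G, hPbot]
      | succ i ih =>
        rw [Fin.sum_filter_lt_succ _ (by lia), ih (by lia)]
        simp [Qs]
    have hsum : ∑ i, Qs i = Q := by
      rw [← Fin.sum_filter_lt_of_le Qs le_rfl, hpartial n le_rfl]
      refine Eq.trans (congrArg P ?_) hPQ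
      refine Submodule.eq_of_le_of_finrank_eq (hGle n) ?_
      rw [hGfin n le_rfl, Fin.sum_filter_lt_of_le k le_rfl, hk, Matrix.rank]
    have hrank_le (i : Fin n) : (Qs i).rank ≤ k i := by
      have := (hPdiff _ _ (hGmono i) (hGle _)).2
      rw [hGfin _ i.2.le, hGfin _ i.2, Fin.sum_filter_lt_succ k i.2] at this
      exact Nat.le_of_add_le_add_left ((add_comm _ _).trans_le this)
    refine ⟨Qs, ⟨fun i => (hPdiff _ _ (hGmono i) (hGle _)).1, hsum, fun i => ?_⟩, ?_⟩
    · refine (Finset.sum_eq_sum_iff_of_le fun i _ => hrank_le i).1 ?_ i (Finset.mem_univ i)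
      refine le_antisymm (Finset.sum_le_sum fun i _ => hrank_le i) ?_
      rw [hk, ← hsum]
      exact Matrix.rank_sum_le _ _
    · ext1 i
      beta_reduce
      rw [hpartial _ (by lia), hPrange _ (hGle _), hGF]
end
end

section
/- Let Q₁, …, Qₙ be real symmetric positive semidefinite N×N matrices with rank(Q₁ + ⋯ + Qₙ) = rank Q₁ + ⋯ + rank Qₙ, and let pⱼ ∈ range Qⱼ for each j. Then there exists a single vector p' ∈ ℝ^N with Qⱼ p' = pⱼ for all j = 1, …, n; consequently Σⱼ p'ᵀQⱼp' = p'ᵀ(Σⱼ Qⱼ)p'. -/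
open scoped Matrix

noncomputable section

/-- If the rank of a sum of linear maps is the sum of their ranks, then the maps are jointly
surjective onto the product of their ranges. -/
theorem LinearMap.pi_rangeRestrict_surjective_of_finrank_range_sum {K V W ι : Type*} [Field K]
    [AddCommGroup V] [Module K V] [AddCommGroup W] [Module K W] [FiniteDimensional K W]
    [Fintype ι] (f : ι → V →ₗ[K] W)
    (h : Module.finrank K (range (∑ i, f i)) = ∑ i, Module.finrank K (range (f i))) :
    Function.Surjective (LinearMap.pi fun i => (f i).rangeRestrict) := by
  set L := LinearMap.pi fun i => (f i).rangeRestrict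
  let S : (∀ i, range (f i)) →ₗ[K] W := ∑ i, (range (f i)).subtype ∘ₗ LinearMap.proj i
  have hSL : ∑ i, f i = S ∘ₗ L := by
    ext x
    simp [S, L]
  have hle : Module.finrank K (range (∑ i, f i)) ≤ Module.finrank K (range L) := by
    rw [hSL, range_comp]
    exact Submodule.finrank_map_le S (range L)
  rw [← range_eq_top]
  apply Submodule.eq_top_of_finrank_eq
  apply le_antisymm (Submodule.finrank_le _)
  rwa [Module.finrank_pi_fintype, ← h]

/-- If `Q₁, …, Qₙ` are real symmetric PSD matrices with
`rank(Q₁ + ⋯ + Qₙ) = rank Q₁ + ⋯ + rank Qₙ` and `pⱼ ∈ range Qⱼ` for each `j`, then there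
is a single vector `p'` with `Qⱼ p' = pⱼ` for all `j`; consequently
`Σⱼ p'ᵀ Qⱼ p' = p'ᵀ (Σⱼ Qⱼ) p'`. -/
theorem common_preimage_of_rank_additivity {N n : ℕ}
    (Q : Fin n → Matrix (Fin N) (Fin N) ℝ)
    (hQ : ∀ i, (Q i).PosSemidef)
    (hrank : (∑ i, Q i).rank = ∑ i, (Q i).rank)
    (p : Fin n → (Fin N → ℝ))
    (hp : ∀ j, p j ∈ LinearMap.range (Q j).mulVecLin) :
    ∃ p' : Fin N → ℝ, (∀ j, (Q j).mulVec p' = p j) ∧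
      (∑ j, p' ⬝ᵥ (Q j).mulVec p') = p' ⬝ᵥ (∑ j, Q j).mulVec p' := by
  have hsum : (∑ i, Q i).mulVecLin = ∑ i, (Q i).mulVecLin := by
    ext1 x
    simp
  obtain ⟨x, hx⟩ := LinearMap.pi_rangeRestrict_surjective_of_finrank_range_sum
    (fun i => (Q i).mulVecLin) (hsum ▸ hrank) (fun j => ⟨p j, hp j⟩)
  refine ⟨x, fun j => congrArg Subtype.val (congrFun hx j), ?_⟩
  rw [Matrix.sum_mulVec, dotProduct_sum]
end
end

section
/- Let Q be a real symmetric positive semidefinite N×N matrix and c ∈ ℝ. Then the set {p ∈ ℝ^N : there exists x ∈ ℝ^N with Qx = p and xᵀQx ≤ c} is compact. -/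
open scoped Matrix

noncomputable section

/-- Sublevel sets of `y ↦ y ⬝ᵥ y` are compact. -/
lemma isCompact_setOf_dotProduct_self_le {ι : Type*} [Fintype ι] (c : ℝ) :
    IsCompact {y : ι → ℝ | y ⬝ᵥ y ≤ c} := by
  refine Metric.isCompact_of_isClosed_isBounded
    (isClosed_le (by fun_prop) continuous_const) ?_
  refine Metric.isBounded_closedBall (x := 0) (r := √c) |>.subset fun y hy ↦ ?_
  rw [mem_closedBall_zero_iff, pi_norm_le_iff_of_nonneg (Real.sqrt_nonneg c)]
  intro i
  refine Real.abs_le_sqrt (le_trans ?_ hy)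
  rw [sq]
  exact Finset.single_le_sum (f := fun i ↦ y i * y i) (fun j _ ↦ mul_self_nonneg (y j))
    (Finset.mem_univ i)

/-- For a real symmetric PSD matrix `Q` and `c ∈ ℝ`, the set
`{p : ∃ x, Qx = p and xᵀQx ≤ c}` is compact. -/
theorem psd_sublevel_image_compact {N : ℕ}
    (Q : Matrix (Fin N) (Fin N) ℝ) (hQ : Q.PosSemidef) (c : ℝ) :
    IsCompact {p : Fin N → ℝ | ∃ x : Fin N → ℝ, Q.mulVec x = p ∧ x ⬝ᵥ Q.mulVec x ≤ c} := by
  obtain ⟨B, rfl⟩ : ∃ B : Matrix (Fin N) (Fin N) ℝ, Q = Bᵀ * B := by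
    open scoped MatrixOrder in
    obtain ⟨B, hB⟩ := CStarAlgebra.nonneg_iff_eq_star_mul_self.mp hQ.nonneg
    exact ⟨B, by simpa [Matrix.star_eq_conjTranspose] using hB⟩
  have hcompact : IsCompact ({y : Fin N → ℝ | y ⬝ᵥ y ≤ c} ∩ LinearMap.range B.mulVecLin) :=
    (isCompact_setOf_dotProduct_self_le c).inter_right (Submodule.closed_of_finiteDimensional _)
  convert hcompact.image (f := fun y ↦ Bᵀ *ᵥ y) (by fun_prop) using 1
  have hquad (x : Fin N → ℝ) : x ⬝ᵥ (Bᵀ * B) *ᵥ x = B *ᵥ x ⬝ᵥ B *ᵥ x := by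
    rw [← Matrix.mulVec_mulVec, Matrix.dotProduct_mulVec, Matrix.vecMul_transpose]
  ext p
  constructor
  · rintro ⟨x, rfl, hx⟩
    exact ⟨B *ᵥ x, ⟨(hquad x).symm.trans_le hx, x, rfl⟩, Matrix.mulVec_mulVec x Bᵀ B⟩
  · rintro ⟨_, ⟨hy, x, rfl⟩, rfl⟩
    exact ⟨x, (Matrix.mulVec_mulVec x Bᵀ B).symm, (hquad x).trans_le hy⟩
end
end

section
/- Let B be an invertible real symmetric N×N matrix and Q a real symmetric positive semidefinite N×N matrix such that B − 2Q is invertible and such that yᵀQy < 2 (Qy)ᵀ B⁻¹ (Qy) for every y ∈ ℝ^N with Qy ≠ 0. Then for all x, y ∈ ℝ^N, −(1/2)(x − 2Qy)ᵀ B⁻¹ (x − 2Qy) + yᵀQy ≤ −(1/2) xᵀ (B − 2Q)⁻¹ x, with equality when y = −(B − 2Q)⁻¹ x. -/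
open scoped Matrix

noncomputable section

/-- A symmetric matrix can be moved across the dot product. -/
theorem Matrix.IsSymm.mulVec_dotProduct {n R : Type*} [Fintype n] [CommSemiring R]
    {A : Matrix n n R} (hA : A.IsSymm) (u v : n → R) : A *ᵥ u ⬝ᵥ v = u ⬝ᵥ A *ᵥ v := by
  rw [Matrix.dotProduct_mulVec, ← Matrix.mulVec_transpose, hA.eq]

/-- Completing the square around the critical point `-z`. -/
theorem generating_function_complete_square {n : Type*} [Fintype n] [DecidableEq n]
    {B Q : Matrix n n ℝ} (hBsymm : B.IsSymm) (hB : IsUnit B.det) (hQ : Q.IsSymm)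
    (z w : n → ℝ) :
    -(1 / 2 : ℝ) * (((B - (2 : ℝ) • Q) *ᵥ z - (2 : ℝ) • Q *ᵥ (w - z)) ⬝ᵥ
          B⁻¹ *ᵥ ((B - (2 : ℝ) • Q) *ᵥ z - (2 : ℝ) • Q *ᵥ (w - z)))
        + (w - z) ⬝ᵥ Q *ᵥ (w - z)
      = -(1 / 2 : ℝ) * ((B - (2 : ℝ) • Q) *ᵥ z ⬝ᵥ z)
        + (w ⬝ᵥ Q *ᵥ w - 2 * (Q *ᵥ w ⬝ᵥ B⁻¹ *ᵥ (Q *ᵥ w))) := by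
  have hshift : (B - (2 : ℝ) • Q) *ᵥ z - (2 : ℝ) • Q *ᵥ (w - z)
      = B *ᵥ z - (2 : ℝ) • Q *ᵥ w := by
    rw [Matrix.sub_mulVec, Matrix.smul_mulVec, Matrix.mulVec_sub, smul_sub]
    abel
  have hleft : B⁻¹ *ᵥ (B *ᵥ z) = z := by
    rw [Matrix.mulVec_mulVec, Matrix.nonsing_inv_mul _ hB, Matrix.one_mulVec]
  have hright : B *ᵥ z ⬝ᵥ B⁻¹ *ᵥ (Q *ᵥ w) = z ⬝ᵥ Q *ᵥ w := by
    rw [hBsymm.mulVec_dotProduct, Matrix.mulVec_mulVec, Matrix.mul_nonsing_inv _ hB,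
      Matrix.one_mulVec]
  have hcross : w ⬝ᵥ Q *ᵥ z = z ⬝ᵥ Q *ᵥ w := by
    rw [← hQ.mulVec_dotProduct, dotProduct_comm]
  rw [hshift]
  simp only [Matrix.mulVec_sub, Matrix.mulVec_smul, Matrix.sub_mulVec, Matrix.smul_mulVec,
    sub_dotProduct, dotProduct_sub, smul_dotProduct, dotProduct_smul, smul_eq_mul, hleft, hright,
    hBsymm.mulVec_dotProduct z z, hQ.mulVec_dotProduct _ z, hcross]
  ring

/-- Let `B` be an invertible real symmetric matrix and `Q` a real symmetric
PSD matrix such that `B − 2Q` is invertible and `yᵀQy < 2 (Qy)ᵀ B⁻¹ (Qy)` whenever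
`Qy ≠ 0`. Then for all `x, y`,
`−½ (x − 2Qy)ᵀ B⁻¹ (x − 2Qy) + yᵀQy ≤ −½ xᵀ (B − 2Q)⁻¹ x`,
with equality when `y = −(B − 2Q)⁻¹ x`. -/
theorem generating_function_maximum {N : ℕ}
    (B Q : Matrix (Fin N) (Fin N) ℝ)
    (hBsymm : B.IsSymm) (hB : IsUnit B.det)
    (hQ : Q.PosSemidef) (hBQ : IsUnit (B - (2 : ℝ) • Q).det)
    (hcond : ∀ y : Fin N → ℝ, Q.mulVec y ≠ 0 →
      y ⬝ᵥ Q.mulVec y < 2 * (Q.mulVec y ⬝ᵥ B⁻¹.mulVec (Q.mulVec y))) :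
    (∀ x y : Fin N → ℝ,
      -(1 / 2 : ℝ) * ((x - (2 : ℝ) • Q.mulVec y) ⬝ᵥ B⁻¹.mulVec (x - (2 : ℝ) • Q.mulVec y))
          + y ⬝ᵥ Q.mulVec y
        ≤ -(1 / 2 : ℝ) * (x ⬝ᵥ (B - (2 : ℝ) • Q)⁻¹.mulVec x)) ∧
    (∀ x : Fin N → ℝ,
      -(1 / 2 : ℝ) *
          ((x - (2 : ℝ) • Q.mulVec (-(B - (2 : ℝ) • Q)⁻¹.mulVec x)) ⬝ᵥ
            B⁻¹.mulVec (x - (2 : ℝ) • Q.mulVec (-(B - (2 : ℝ) • Q)⁻¹.mulVec x)))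
          + (-(B - (2 : ℝ) • Q)⁻¹.mulVec x) ⬝ᵥ Q.mulVec (-(B - (2 : ℝ) • Q)⁻¹.mulVec x)
        = -(1 / 2 : ℝ) * (x ⬝ᵥ (B - (2 : ℝ) • Q)⁻¹.mulVec x)) := by
  have hQsymm : Q.IsSymm := by
    simpa [Matrix.IsSymm, Matrix.IsHermitian, Matrix.conjTranspose_eq_transpose_of_trivial]
      using hQ.isHermitian
  have hinv (x : Fin N → ℝ) :
      (B - (2 : ℝ) • Q) *ᵥ ((B - (2 : ℝ) • Q)⁻¹ *ᵥ x) = x := by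
    rw [Matrix.mulVec_mulVec, Matrix.mul_nonsing_inv _ hBQ, Matrix.one_mulVec]
  constructor
  · intro x y
    have h := generating_function_complete_square hBsymm hB hQsymm
      ((B - (2 : ℝ) • Q)⁻¹ *ᵥ x) (y + (B - (2 : ℝ) • Q)⁻¹ *ᵥ x)
    rw [hinv, add_sub_cancel_right] at h
    rw [h, add_le_iff_nonpos_right, sub_nonpos]
    by_cases hw : Q *ᵥ (y + (B - (2 : ℝ) • Q)⁻¹ *ᵥ x) = 0
    · simp [hw]
    · exact (hcond _ hw).le
  · intro x
    have h := generating_function_complete_square hBsymm hB hQsymm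
      ((B - (2 : ℝ) • Q)⁻¹ *ᵥ x) 0
    rw [hinv, zero_sub] at h
    simpa only [Matrix.mulVec_zero, dotProduct_zero, mul_zero, sub_zero, add_zero] using h
end
end

section
/- Let B be a real symmetric N×N matrix and let P and M be linear subspaces of ℝ^N with xᵀBx > 0 for all nonzero x ∈ P, xᵀBx < 0 for all nonzero x ∈ M, and dim P + dim M = N. Then B is invertible and, counted with multiplicity, B has exactly dim P positive eigenvalues and exactly dim M negative eigenvalues. -/
open scoped Matrix

noncomputable section

/-- The quadratic form of a real symmetric matrix, written in eigenvector coordinates. -/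
theorem Matrix.IsHermitian.dotProduct_mulVec_eq_sum_eigenvalues {n : Type*} [Fintype n]
    [DecidableEq n] {B : Matrix n n ℝ} (hB : B.IsHermitian) (x : n → ℝ) :
    x ⬝ᵥ B *ᵥ x =
      ∑ i, hB.eigenvalues i * ((hB.eigenvectorUnitary : Matrix n n ℝ)ᵀ *ᵥ x) i ^ 2 := by
  conv_lhs => rw [hB.spectral_theorem, Unitary.conjStarAlgAut_apply]
  rw [Matrix.star_eq_conjTranspose, Matrix.conjTranspose_eq_transpose_of_trivial,
    ← Matrix.mulVec_mulVec, ← Matrix.mulVec_mulVec, Matrix.dotProduct_mulVec,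
    ← Matrix.mulVec_transpose]
  simp only [dotProduct, Matrix.mulVec_diagonal]
  exact Finset.sum_congr rfl fun i _ => by simp; ring

/-- A subspace on which no nonzero vector is killed by all the coordinates satisfying `p`
has dimension at most the number of such coordinates. -/
theorem Submodule.finrank_le_card_filter {K V n : Type*} [Field K] [AddCommGroup V] [Module K V]
    [Fintype n] (f : V →ₗ[K] n → K) (W : Submodule K V) (p : n → Prop) [DecidablePred p]
    (h : ∀ x ∈ W, (∀ i, p i → f x i = 0) → x = 0) :
    Module.finrank K W ≤ (Finset.univ.filter p).card := by
  let g : W →ₗ[K] {i // p i} → K := LinearMap.funLeft K K Subtype.val ∘ₗ f ∘ₗ W.subtype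
  have hg : Function.Injective g := by
    rw [injective_iff_map_eq_zero]
    intro x hx
    exact Subtype.ext (h x x.2 fun i hi => congrFun hx ⟨i, hi⟩)
  simpa [Fintype.card_subtype] using LinearMap.finrank_le_finrank_of_injective hg

/-- Let `B` be a real symmetric matrix, positive definite on a subspace `P`
and negative definite on a subspace `M`, with `dim P + dim M = N`. Then `B` is
invertible with exactly `dim P` positive and `dim M` negative eigenvalues (counted with
multiplicity). -/
theorem inertia_of_definite_subspaces {N : ℕ}
    (B : Matrix (Fin N) (Fin N) ℝ) (hB : B.IsHermitian)
    (P M : Submodule ℝ (Fin N → ℝ))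
    (hP : ∀ x ∈ P, x ≠ 0 → 0 < x ⬝ᵥ B.mulVec x)
    (hM : ∀ x ∈ M, x ≠ 0 → x ⬝ᵥ B.mulVec x < 0)
    (hdim : Module.finrank ℝ P + Module.finrank ℝ M = N) :
    IsUnit B.det ∧
    (Finset.univ.filter fun i => 0 < hB.eigenvalues i).card = Module.finrank ℝ P ∧
    (Finset.univ.filter fun i => hB.eigenvalues i < 0).card = Module.finrank ℝ M := by
  have hq := hB.dotProduct_mulVec_eq_sum_eigenvalues
  let f := ((hB.eigenvectorUnitary : Matrix (Fin N) (Fin N) ℝ)ᵀ).mulVecLin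
  have hPle := P.finrank_le_card_filter f (fun i => 0 < hB.eigenvalues i) fun x hx h0 => by
    by_contra hne
    refine (hP x hx hne).not_ge (hq x ▸ Finset.sum_nonpos fun i _ => ?_)
    by_cases hi : 0 < hB.eigenvalues i
    · have : (_ᵀ *ᵥ x) i = 0 := h0 i hi
      simp [this]
    · exact mul_nonpos_of_nonpos_of_nonneg (not_lt.mp hi) (sq_nonneg _)
  have hMle := M.finrank_le_card_filter f (fun i => hB.eigenvalues i < 0) fun x hx h0 => by
    by_contra hne
    refine (hM x hx hne).not_ge (hq x ▸ Finset.sum_nonneg fun i _ => ?_)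
    by_cases hi : hB.eigenvalues i < 0
    · have : (_ᵀ *ᵥ x) i = 0 := h0 i hi
      simp [this]
    · exact mul_nonneg (not_lt.mp hi) (sq_nonneg _)
  have hdisj : Disjoint (Finset.univ.filter fun i => 0 < hB.eigenvalues i)
      (Finset.univ.filter fun i => hB.eigenvalues i < 0) :=
    Finset.disjoint_filter.mpr fun _ _ h => h.not_gt
  have hcard := Finset.card_union_of_disjoint hdisj
  have hle := Finset.card_le_univ ((Finset.univ.filter fun i => 0 < hB.eigenvalues i) ∪
    Finset.univ.filter fun i => hB.eigenvalues i < 0)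
  rw [Fintype.card_fin] at hle
  refine ⟨?_, by lia, by lia⟩
  have huniv := Finset.eq_univ_of_card ((Finset.univ.filter fun i => 0 < hB.eigenvalues i) ∪
    Finset.univ.filter fun i => hB.eigenvalues i < 0) (by rw [Fintype.card_fin]; lia)
  rw [isUnit_iff_ne_zero, hB.det_eq_prod_eigenvalues]
  refine Finset.prod_ne_zero_iff.mpr fun i _ => ?_
  have hi := huniv ▸ Finset.mem_univ i
  simp only [Finset.mem_union, Finset.mem_filter, Finset.mem_univ, true_and] at hi
  exact hi.elim (fun h => h.ne') fun h => h.ne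
end
end
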